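/- The expected number of (FVar)-redexes in a uniformly random λυ-term of size n satisfies E(X_n)/n → 3/256, where an (FVar)-redex is a subterm of the form 0[a/] (the index 0 under a closure whose substitution is a slash). -/

import Mathlib

open Finset Filter

mutual
inductive Tm : Type
  | idx : Nat → Tm
  | lam : Tm → Tm
  | app : Tm → Tm → Tm
  | clos : Tm → Subst → Tm
inductive Subst : Type
  | slash : Tm → Subst
  | lift : Subst → Subst
  | shift : Subst
end

mutual
/-- Natural size of a λυ-term: every constructor weighs 1; index n has size n+1. -/
def Tm.size : Tm → Nat
  | .idx n => n + 1
  | .lam a => Tm.size a + 1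
  | .app a b => Tm.size a + Tm.size b + 1
  | .clos a s => Tm.size a + Subst.size s + 1
/-- Natural size of an explicit substitution. -/
def Subst.size : Subst → Nat
  | .slash a => Tm.size a + 1
  | .lift s => Subst.size s + 1
  | .shift => 1
end

/-- Number of λυ-terms of size `n`. -/
noncomputable def tcount (n : ℕ) : ℕ := Nat.card {a : Tm // Tm.size a = n}

/-- Number of explicit substitutions of size `n`. -/
noncomputable def scount (n : ℕ) : ℕ := Nat.card {s : Subst // Subst.size s = n}

/-- Expected value of the statistic `f` on a uniformly random λυ-term of size `n`
(the statistic is assumed to be bounded by the size, so summing `k` up to `n` suffices). -/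
noncomputable def expectTm (f : Tm → ℕ) (n : ℕ) : ℝ :=
  (∑ k ∈ Finset.range (n + 1),
      (k : ℝ) * (Nat.card {a : Tm // Tm.size a = n ∧ f a = k} : ℝ)) / (tcount n : ℝ)

mutual
/-- Number of (fvar)-redexes occurring in a λυ-term. -/
def Tm.fvarCount : Tm → ℕ
  | .idx _ => 0
  | .lam a => Tm.fvarCount a
  | .app a b => Tm.fvarCount a + Tm.fvarCount b
  | .clos (.idx 0) (.slash b) => Tm.fvarCount b + 1
  | .clos a s => Tm.fvarCount a + Subst.fvarCount s
/-- Number of (fvar)-redexes occurring in a substitution. -/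
def Subst.fvarCount : Subst → ℕ
  | .slash a => Tm.fvarCount a
  | .lift s => Subst.fvarCount s
  | .shift => 0
end

/-!
Both λυ-terms and substitutions are combinatorial classes with a one-step decomposition into sums
and products, so their generating functions satisfy polynomial equations. If `T` counts terms, then
`1 + T` solves `U = X U² + 1`, the equation of the Catalan series; hence there are `catalan n` terms
of size `n ≥ 1`. The series `F` of the total number of redexes satisfies the linearised equation
`F (1 - 2 X (1 + T)) = (1 - X) X³ T`. Differentiating the Catalan equation shows that
`1 / (1 - 2 X (1 + T))` is the series of central binomial coefficients `c n`, whence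
`2 [Xⁿ⁺⁴] F = c (n + 2) - 3 c (n + 1) + 2 c n`. Since `(n + 1) * catalan n = c n` and
`c (n + 1) / c n → 4`, the limit is `(4² - 3 * 4 + 2) / 2 / 4⁴ = 3 / 256`.
-/

open PowerSeries Topology

/-- A combinatorial class in the sense of the symbolic method: a type with a size function
taking each value finitely often. -/
class CombinatorialClass (α : Type*) where
  size : α → ℕ
  finite_setOf_size_eq : ∀ n, {a | size a = n}.Finite

namespace CombinatorialClass

section Level

variable (α : Type*) {β : Type*} [CombinatorialClass α] [CombinatorialClass β]

/-- The objects of size `n` in a combinatorial class. -/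
noncomputable def level (n : ℕ) : Finset α :=
  (finite_setOf_size_eq (α := α) n).toFinset

variable {α}

@[simp]
theorem mem_level {n : ℕ} {a : α} : a ∈ level α n ↔ size a = n := by
  simp [level]

theorem natCard_size_eq (n : ℕ) : Nat.card {a : α // size a = n} = #(level α n) :=
  Nat.subtype_card _ fun _ => mem_level

theorem natCard_size_eq_and (n : ℕ) (p : α → Prop) [DecidablePred p] :
    Nat.card {a : α // size a = n ∧ p a} = #{a ∈ level α n | p a} :=
  Nat.subtype_card _ fun _ => by simp

end Level

section Constructions

variable {α β : Type*} [CombinatorialClass α] [CombinatorialClass β]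

instance : CombinatorialClass Unit where
  size _ := 0
  finite_setOf_size_eq _ := Set.toFinite _

instance : CombinatorialClass ℕ where
  size := id
  finite_setOf_size_eq := Set.finite_singleton

instance : CombinatorialClass (α ⊕ β) where
  size := Sum.elim size size
  finite_setOf_size_eq n := by
    refine (((level α n).disjSum (level β n)).finite_toSet).subset ?_
    rintro (a | b) h <;> simpa using h

instance : CombinatorialClass (α × β) where
  size p := size p.1 + size p.2
  finite_setOf_size_eq n := by
    classical
    refine ((antidiagonal n).biUnion fun k => level α k.1 ×ˢ level β k.2).finite_toSet.subset ?_
    rintro ⟨a, b⟩ h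
    simpa using h

theorem level_sum (n : ℕ) : level (α ⊕ β) n = (level α n).disjSum (level β n) := by
  ext (a | b) <;> simp [size]

theorem filter_level_prod {n : ℕ} {k : ℕ × ℕ} (hk : k ∈ antidiagonal n) :
    {p ∈ level (α × β) n | (size p.1, size p.2) = k} = level α k.1 ×ˢ level β k.2 := by
  ext ⟨a, b⟩
  simp only [mem_filter, mem_level, mem_product, Prod.ext_iff, size]
  rw [HasAntidiagonal.mem_antidiagonal] at hk
  lia

end Constructions

section GenFun

variable {α β R : Type*} [CombinatorialClass α] [CombinatorialClass β] [CommSemiring R]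

/-- The weighted ordinary generating function `∑ a, w a * X ^ size a` of a combinatorial class. -/
noncomputable def genFun (w : α → R) : R⟦X⟧ :=
  PowerSeries.mk fun n => ∑ a ∈ level α n, w a

@[simp]
theorem coeff_genFun (w : α → R) (n : ℕ) : coeff n (genFun w) = ∑ a ∈ level α n, w a :=
  coeff_mk _ _

theorem genFun_zero : genFun (fun _ : α => (0 : R)) = 0 := by
  ext n
  simp

theorem genFun_add (v w : α → R) : genFun (fun a => v a + w a) = genFun v + genFun w := by
  ext n
  simp [sum_add_distrib]

theorem genFun_unit (w : Unit → R) : genFun w = C (w ()) := by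
  ext n
  have hlevel : level Unit n = if n = 0 then {()} else ∅ := by
    ext
    split_ifs <;> simp [size, *, eq_comm]
  rw [coeff_genFun, hlevel, coeff_C]
  split_ifs <;> simp

theorem genFun_nat (w : ℕ → R) : genFun w = PowerSeries.mk w := by
  ext n
  have hlevel : level ℕ n = {n} := by
    ext
    simp [size]
  simp [hlevel]

theorem genFun_sum (w : α ⊕ β → R) :
    genFun w = genFun (fun a => w (.inl a)) + genFun fun b => w (.inr b) := by
  ext n
  simp [level_sum]

theorem genFun_prod (v : α → R) (w : β → R) :
    genFun (fun p : α × β => v p.1 * w p.2) = genFun v * genFun w := by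
  ext n
  have hmaps : ∀ p ∈ level (α × β) n, (size p.1, size p.2) ∈ antidiagonal n := by
    simp [size]
  rw [coeff_genFun, coeff_mul, ← sum_fiberwise_of_maps_to hmaps]
  refine sum_congr rfl fun k hk => ?_
  rw [filter_level_prod hk, coeff_genFun, coeff_genFun, sum_mul_sum, sum_product]

theorem genFun_eq_X_mul_of_equiv (e : β ≃ α) (he : ∀ b, size (e b) = size b + 1) (w : α → R) :
    genFun w = X * genFun (w ∘ e) := by
  ext (_ | n)
  · rw [coeff_zero_X_mul, coeff_genFun]
    refine sum_eq_zero fun a ha => ?_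
    have hsize := he (e.symm a)
    rw [e.apply_symm_apply, mem_level.mp ha] at hsize
    lia
  · rw [coeff_succ_X_mul, coeff_genFun, coeff_genFun]
    exact (sum_equiv e (by simp [he]) (by simp)).symm

theorem genFun_indicator_singleton (a : α) :
    genFun (Set.indicator {a} (1 : α → R)) = X ^ size a := by
  classical
  ext n
  simp [coeff_X_pow, eq_comm]

variable (α R) in
/-- The ordinary generating function counting the objects of a combinatorial class by size. -/
noncomputable def countSeries : R⟦X⟧ :=
  genFun (1 : α → R)

theorem coeff_countSeries (n : ℕ) : coeff n (countSeries α R) = #(level α n) := by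
  simp [countSeries]

theorem genFun_fst (v : α → R) :
    genFun (fun p : α × β => v p.1) = genFun v * countSeries β R := by
  simpa [countSeries] using genFun_prod v (1 : β → R)

theorem genFun_snd (w : β → R) :
    genFun (fun p : α × β => w p.2) = countSeries α R * genFun w := by
  simpa [countSeries] using genFun_prod (1 : α → R) w

end GenFun

end CombinatorialClass

section CatalanSeries

variable (R : Type*)

section Semiring

variable [CommSemiring R]

/-- The series `∑ n, catalan n * X ^ n` with coefficients in `R`. -/
noncomputable def catalanSeriesIn : R⟦X⟧ :=
  PowerSeries.map (Nat.castRingHom R) catalanSeries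

/-- The series `∑ n, n.centralBinom * X ^ n` with coefficients in `R`. -/
noncomputable def centralBinomSeries : R⟦X⟧ :=
  PowerSeries.mk fun n => (n.centralBinom : R)

theorem catalanSeriesIn_eq : catalanSeriesIn R = X * catalanSeriesIn R ^ 2 + 1 := by
  have h := congrArg (PowerSeries.map (Nat.castRingHom R)) catalanSeries_sq_mul_X_add_one
  simp only [map_add, map_mul, map_pow, map_X, map_one] at h
  rw [mul_comm]
  exact h.symm

theorem derivative_X_mul_catalanSeriesIn :
    d⁄dX R (X * catalanSeriesIn R) = centralBinomSeries R := by
  ext n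
  simp only [coeff_derivative, coeff_succ_X_mul, catalanSeriesIn, coeff_map,
    catalanSeries_coeff, centralBinomSeries, coeff_mk, ← succ_mul_catalan_eq_centralBinom]
  push_cast
  ring

end Semiring

section Ring

variable [CommRing R]

variable {R} in
theorem eq_of_eq_X_mul_sq_add_one {U V : R⟦X⟧} (hU : U = X * U ^ 2 + 1)
    (hV : V = X * V ^ 2 + 1) : U = V := by
  have hunit : IsUnit (1 - X * (U + V)) := by
    simp [isUnit_iff_constantCoeff]
  have hmul : (U - V) * (1 - X * (U + V)) = 0 := by
    linear_combination hU - hV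
  exact sub_eq_zero.mp (hunit.mul_left_eq_zero.mp hmul)

theorem centralBinomSeries_mul_one_sub :
    centralBinomSeries R * (1 - 2 * (X * catalanSeriesIn R)) = 1 := by
  have hY : X * catalanSeriesIn R = X + (X * catalanSeriesIn R) ^ 2 := by
    linear_combination X * catalanSeriesIn_eq R
  have hderiv := congrArg (d⁄dX R) hY
  simp only [map_add, Derivation.leibniz_pow, derivative_X, derivative_X_mul_catalanSeriesIn,
    smul_eq_mul, nsmul_eq_mul, Nat.cast_ofNat, Nat.add_one_sub_one, pow_one] at hderiv
  linear_combination hderiv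

end Ring

end CatalanSeries

theorem finite_setOf_size_lt (n : ℕ) :
    {a : Tm | a.size < n}.Finite ∧ {s : Subst | s.size < n}.Finite := by
  induction n with
  | zero => simp
  | succ n ih =>
    obtain ⟨hTm, hSubst⟩ := ih
    constructor
    · refine ((((Set.finite_Iio n).image Tm.idx).union (hTm.image Tm.lam)).union
        ((hTm.image2 Tm.app hTm).union (hTm.image2 Tm.clos hSubst))).subset ?_
      rintro (k | a | ⟨a, b⟩ | ⟨a, s⟩) h <;> grind [Tm.size]
    · refine (((hTm.image Subst.slash).union (hSubst.image Subst.lift)).union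
        (Set.finite_singleton Subst.shift)).subset ?_
      rintro (a | s | _) h <;> grind [Subst.size]

open CombinatorialClass

instance : CombinatorialClass Tm where
  size := Tm.size
  finite_setOf_size_eq n :=
    (finite_setOf_size_lt (n + 1)).1.subset fun _ h => Nat.lt_succ_of_le h.le

instance : CombinatorialClass Subst where
  size := Subst.size
  finite_setOf_size_eq n :=
    (finite_setOf_size_lt (n + 1)).2.subset fun _ h => Nat.lt_succ_of_le h.le

/-- The decomposition of a λυ-term by its head constructor. -/
def Tm.equivSum : ℕ ⊕ Tm ⊕ (Tm × Tm) ⊕ (Tm × Subst) ≃ Tm where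
  toFun
    | .inl n => .idx n
    | .inr (.inl a) => .lam a
    | .inr (.inr (.inl (a, b))) => .app a b
    | .inr (.inr (.inr (a, s))) => .clos a s
  invFun
    | .idx n => .inl n
    | .lam a => .inr (.inl a)
    | .app a b => .inr (.inr (.inl (a, b)))
    | .clos a s => .inr (.inr (.inr (a, s)))
  left_inv := by rintro (n | a | ⟨a, b⟩ | ⟨a, s⟩) <;> rfl
  right_inv := by rintro (n | a | ⟨a, b⟩ | ⟨a, s⟩) <;> rfl

/-- The decomposition of a substitution by its head constructor. -/
def Subst.equivSum : Tm ⊕ Subst ⊕ Unit ≃ Subst where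
  toFun
    | .inl a => .slash a
    | .inr (.inl s) => .lift s
    | .inr (.inr ()) => .shift
  invFun
    | .slash a => .inl a
    | .lift s => .inr (.inl s)
    | .shift => .inr (.inr ())
  left_inv := by rintro (a | s | _) <;> rfl
  right_inv := by rintro (a | s | _) <;> rfl

theorem Tm.size_equivSum (x : ℕ ⊕ Tm ⊕ (Tm × Tm) ⊕ (Tm × Subst)) :
    CombinatorialClass.size (Tm.equivSum x) = CombinatorialClass.size x + 1 := by
  rcases x with n | a | ⟨a, b⟩ | ⟨a, s⟩ <;> rfl

theorem Subst.size_equivSum (x : Tm ⊕ Subst ⊕ Unit) :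
    CombinatorialClass.size (Subst.equivSum x) = CombinatorialClass.size x + 1 := by
  rcases x with a | s | _ <;> rfl

section Weights

variable {R : Type*} [CommSemiring R]

theorem Tm.genFun_eq_X_mul (w : Tm → R) :
    genFun w = X * (PowerSeries.mk (fun n => w (.idx n)) + genFun (fun a => w (.lam a)) +
      genFun (fun p : Tm × Tm => w (.app p.1 p.2)) +
      genFun fun p : Tm × Subst => w (.clos p.1 p.2)) := by
  rw [genFun_eq_X_mul_of_equiv Tm.equivSum Tm.size_equivSum, genFun_sum, genFun_sum, genFun_sum,
    genFun_nat, ← add_assoc, ← add_assoc]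
  rfl

theorem Subst.genFun_eq_X_mul (w : Subst → R) :
    genFun w =
      X * (genFun (fun a => w (.slash a)) + genFun (fun s => w (.lift s)) + C (w .shift)) := by
  rw [genFun_eq_X_mul_of_equiv Subst.equivSum Subst.size_equivSum, genFun_sum, genFun_sum,
    genFun_unit, ← add_assoc]
  rfl

end Weights

section Counting

section Semiring

variable (R : Type*) [CommSemiring R]

theorem Tm.countSeries_eq :
    countSeries Tm R = X * (PowerSeries.mk 1 + countSeries Tm R +
      countSeries Tm R * countSeries Tm R + countSeries Tm R * countSeries Subst R) := by
  conv_lhs => rw [countSeries, Tm.genFun_eq_X_mul]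
  simp only [countSeries, ← genFun_prod, Pi.one_apply, mul_one]
  rfl

theorem Subst.countSeries_eq :
    countSeries Subst R = X * (countSeries Tm R + countSeries Subst R + 1) := by
  conv_lhs => rw [countSeries, Subst.genFun_eq_X_mul]
  simp only [countSeries, Pi.one_apply, map_one]
  rfl

end Semiring

theorem one_add_countSeries_tm_eq_catalanSeriesIn (R : Type*) [CommRing R] :
    1 + countSeries Tm R = catalanSeriesIn R := by
  have hgeom : PowerSeries.mk (1 : ℕ → R) * (1 - X) = 1 := mk_one_mul_one_sub_eq_one R
  refine eq_of_eq_X_mul_sq_add_one ?_ (catalanSeriesIn_eq R)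
  linear_combination (1 - X) * Tm.countSeries_eq R + X * hgeom +
    X * countSeries Tm R * Subst.countSeries_eq R

theorem tcount_eq_card_level (n : ℕ) : tcount n = #(level Tm n) :=
  natCard_size_eq n

theorem tcount_succ (n : ℕ) : tcount (n + 1) = catalan (n + 1) := by
  have h := congrArg (coeff (n + 1)) (one_add_countSeries_tm_eq_catalanSeriesIn ℤ)
  simpa [catalanSeriesIn, coeff_one, coeff_countSeries, ← tcount_eq_card_level] using h

end Counting

section Redexes

-- The redex at the root is counted by a product of indicators so that its series factors.
theorem Tm.fvarCount_clos (R : Type*) [CommSemiring R] (a : Tm) (s : Subst) :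
    ((Tm.clos a s).fvarCount : R) = a.fvarCount + s.fvarCount +
      Set.indicator {Tm.idx 0} 1 a * Set.indicator (Set.range Subst.slash) 1 s := by
  rcases a with (_ | k) | _ | _ | _ <;> rcases s with _ | _ | _ <;>
    simp [Tm.fvarCount, Subst.fvarCount]

mutual

theorem Tm.fvarCount_le_size : ∀ a : Tm, a.fvarCount ≤ a.size
  | .idx _ => by simp [Tm.fvarCount]
  | .lam a => by
    have := a.fvarCount_le_size
    simp only [Tm.fvarCount, Tm.size]
    lia
  | .app a b => by
    have := a.fvarCount_le_size
    have := b.fvarCount_le_size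
    simp only [Tm.fvarCount, Tm.size]
    lia
  | .clos a s => by
    have := a.fvarCount_le_size
    have := s.fvarCount_le_size
    have hclos := Tm.fvarCount_clos ℕ a s
    have hredex : Set.indicator {Tm.idx 0} 1 a * Set.indicator (Set.range Subst.slash) 1 s ≤ 1 :=
      mul_le_one' (Set.indicator_le_self' (by simp) a) (Set.indicator_le_self' (by simp) s)
    simp only [Nat.cast_id] at hclos
    simp only [Tm.size]
    lia

theorem Subst.fvarCount_le_size : ∀ s : Subst, s.fvarCount ≤ s.size
  | .slash a => by
    have := a.fvarCount_le_size
    simp only [Subst.fvarCount, Subst.size]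
    lia
  | .lift s => by
    have := s.fvarCount_le_size
    simp only [Subst.fvarCount, Subst.size]
    lia
  | .shift => by simp [Subst.fvarCount]

end

section Semiring

variable (R : Type*) [CommSemiring R]

/-- The generating function of the total number of (fvar)-redexes in all terms of each size. -/
noncomputable def Tm.fvarSeries : R⟦X⟧ :=
  genFun fun a : Tm => (a.fvarCount : R)

/-- The generating function of the total number of (fvar)-redexes in all substitutions of each
size. -/
noncomputable def Subst.fvarSeries : R⟦X⟧ :=
  genFun fun s : Subst => (s.fvarCount : R)

theorem genFun_indicator_range_slash :
    genFun (Set.indicator (Set.range Subst.slash) (1 : Subst → R)) = X * countSeries Tm R := by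
  rw [Subst.genFun_eq_X_mul]
  simp [genFun_zero, countSeries, Pi.one_def]

theorem genFun_fvarCount_app :
    genFun (fun p : Tm × Tm => ((Tm.app p.1 p.2).fvarCount : R)) =
      2 * countSeries Tm R * Tm.fvarSeries R := by
  simp only [Tm.fvarCount, Nat.cast_add]
  rw [genFun_add, genFun_fst (fun a : Tm => (a.fvarCount : R)),
    genFun_snd (fun a : Tm => (a.fvarCount : R)), Tm.fvarSeries]
  ring

theorem genFun_fvarCount_clos :
    genFun (fun p : Tm × Subst => ((Tm.clos p.1 p.2).fvarCount : R)) =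
      Tm.fvarSeries R * countSeries Subst R + countSeries Tm R * Subst.fvarSeries R +
        X ^ 2 * countSeries Tm R := by
  simp only [Tm.fvarCount_clos]
  rw [genFun_add, genFun_add, genFun_fst (fun a : Tm => (a.fvarCount : R)),
    genFun_snd (fun s : Subst => (s.fvarCount : R)), genFun_prod, genFun_indicator_singleton,
    genFun_indicator_range_slash, Tm.fvarSeries, Subst.fvarSeries, pow_two, mul_assoc X X]
  congr 2
  exact pow_one X

theorem Tm.fvarSeries_eq :
    Tm.fvarSeries R = X * (Tm.fvarSeries R + 2 * countSeries Tm R * Tm.fvarSeries R +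
      (Tm.fvarSeries R * countSeries Subst R + countSeries Tm R * Subst.fvarSeries R +
        X ^ 2 * countSeries Tm R)) := by
  rw [← genFun_fvarCount_app, ← genFun_fvarCount_clos]
  conv_lhs => rw [Tm.fvarSeries, Tm.genFun_eq_X_mul, ← genFun_nat]
  simp [Tm.fvarCount, genFun_zero, Tm.fvarSeries]

theorem Subst.fvarSeries_eq :
    Subst.fvarSeries R = X * (Tm.fvarSeries R + Subst.fvarSeries R) := by
  conv_lhs => rw [Subst.fvarSeries, Subst.genFun_eq_X_mul]
  simp [Subst.fvarCount, Tm.fvarSeries, Subst.fvarSeries]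

end Semiring

variable (R : Type*) [CommRing R]

theorem Tm.fvarSeries_mul_one_sub :
    Tm.fvarSeries R * (1 - 2 * (X * catalanSeriesIn R)) =
      (1 - X) * X ^ 3 * countSeries Tm R := by
  rw [← one_add_countSeries_tm_eq_catalanSeriesIn]
  linear_combination (1 - X) * Tm.fvarSeries_eq R +
    X * Tm.fvarSeries R * Subst.countSeries_eq R + X * countSeries Tm R * Subst.fvarSeries_eq R

theorem Tm.two_mul_fvarSeries :
    2 * Tm.fvarSeries R =
      (1 - X) * X ^ 2 * ((1 - 2 * X) * centralBinomSeries R - 1) := by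
  have hF := Tm.fvarSeries_mul_one_sub R
  have hB := centralBinomSeries_mul_one_sub R
  rw [← one_add_countSeries_tm_eq_catalanSeriesIn] at hF hB
  linear_combination 2 * centralBinomSeries R * hF -
    (2 * Tm.fvarSeries R + (1 - X) * X ^ 2) * hB

theorem Tm.two_mul_coeff_fvarSeries (n : ℕ) :
    2 * coeff (n + 4) (Tm.fvarSeries R) =
      (n + 2).centralBinom - 3 * (n + 1).centralBinom + 2 * n.centralBinom := by
  have hexpand : (2 : R) • Tm.fvarSeries R =
      X * (X * centralBinomSeries R) - (3 : R) • (X * (X * (X * centralBinomSeries R))) +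
        (2 : R) • (X * (X * (X * (X * centralBinomSeries R)))) - X ^ 2 + X ^ 3 := by
    simp only [smul_eq_C_mul, map_ofNat]
    linear_combination Tm.two_mul_fvarSeries R
  have hcoeff := congrArg (coeff (n + 4)) hexpand
  simpa [coeff_succ_X_mul, coeff_X_pow, centralBinomSeries] using hcoeff

end Redexes

section Asymptotics

theorem expectTm_eq_sum_div {f : Tm → ℕ} (hf : ∀ a, f a ≤ a.size) (n : ℕ) :
    expectTm f n = (∑ a ∈ level Tm n, (f a : ℝ)) / tcount n := by
  have hmaps : ∀ a ∈ level Tm n, f a ∈ range (n + 1) := fun a ha =>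
    mem_range_succ_iff.mpr ((hf a).trans (mem_level.mp ha).le)
  rw [expectTm, ← sum_fiberwise_of_maps_to hmaps]
  congr 1
  refine sum_congr rfl fun k _ => ?_
  have hcard : Nat.card {a : Tm // a.size = n ∧ f a = k} = #{a ∈ level Tm n | f a = k} :=
    natCard_size_eq_and n (f · = k)
  rw [hcard, mul_comm, ← nsmul_eq_mul, ← sum_const]
  exact sum_congr rfl fun a ha => by rw [(mem_filter.mp ha).2]

theorem expectTm_fvarCount (n : ℕ) :
    expectTm Tm.fvarCount (n + 4) =
      (n + 5) * ((n + 2).centralBinom - 3 * (n + 1).centralBinom + 2 * n.centralBinom) /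
        (2 * (n + 4).centralBinom) := by
  have hF := Tm.two_mul_coeff_fvarSeries ℝ n
  have hT : ((n + 5) * catalan (n + 4) : ℝ) = (n + 4).centralBinom := by
    exact_mod_cast succ_mul_catalan_eq_centralBinom (n + 4)
  have hcat : (catalan (n + 4) : ℝ) ≠ 0 := by
    refine right_ne_zero_of_mul (hT.trans_ne ?_)
    exact_mod_cast (n + 4).centralBinom_ne_zero
  rw [expectTm_eq_sum_div Tm.fvarCount_le_size, tcount_succ, ← coeff_genFun, ← Tm.fvarSeries,
    ← hF, ← hT]
  field_simp

theorem tendsto_centralBinom_succ_div :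
    Tendsto (fun n : ℕ => ((n + 1).centralBinom / n.centralBinom : ℝ)) atTop (𝓝 4) := by
  have hratio (n : ℕ) :
      ((n + 1).centralBinom / n.centralBinom : ℝ) = 4 - 2 * (1 / ((n : ℝ) + 1)) := by
    have hrec : ((n + 1) * (n + 1).centralBinom : ℝ) = 2 * (2 * n + 1) * n.centralBinom := by
      exact_mod_cast n.succ_mul_centralBinom_succ
    have hpos : (n.centralBinom : ℝ) ≠ 0 := Nat.cast_ne_zero.mpr n.centralBinom_ne_zero
    field_simp
    linarith
  simpa only [hratio, mul_zero, sub_zero] using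
    (tendsto_one_div_add_atTop_nhds_zero_nat.const_mul (2 : ℝ)).const_sub 4

theorem tendsto_centralBinom_add_div (k : ℕ) :
    Tendsto (fun n : ℕ => ((n + k).centralBinom / n.centralBinom : ℝ)) atTop (𝓝 (4 ^ k)) := by
  induction k with
  | zero =>
    have hpos (n : ℕ) : (n.centralBinom : ℝ) ≠ 0 := Nat.cast_ne_zero.mpr n.centralBinom_ne_zero
    simp [hpos]
  | succ k ih =>
    have hstep := tendsto_centralBinom_succ_div.comp (tendsto_add_atTop_nat k)
    rw [pow_succ']
    refine (hstep.mul ih).congr fun n => ?_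
    exact div_mul_div_cancel₀ (Nat.cast_ne_zero.mpr (n + k).centralBinom_ne_zero)

end Asymptotics

/-- the expected number of (FVar)-redexes (subterms 0[a/]) per size n
tends to 3/256. -/
theorem stmt16 :
    Tendsto (fun n : ℕ => expectTm Tm.fvarCount n / (n : ℝ)) atTop (nhds (3 / 256)) := by
  rw [← tendsto_add_atTop_iff_nat 4]
  have hnum := ((tendsto_centralBinom_add_div 2).sub
    ((tendsto_centralBinom_add_div 1).const_mul 3)).add_const 2
  have hden := (tendsto_centralBinom_add_div 4).const_mul 2
  have hshift := tendsto_add_mul_div_add_mul_atTop_nhds (5 : ℝ) 4 1 one_ne_zero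
  rw [show (3 / 256 : ℝ) = 1 / 1 * ((4 ^ 2 - 3 * 4 ^ 1 + 2) / (2 * 4 ^ 4)) by norm_num]
  refine (hshift.mul (hnum.div hden (by norm_num))).congr fun n => ?_
  have hpos : (n.centralBinom : ℝ) ≠ 0 := Nat.cast_ne_zero.mpr n.centralBinom_ne_zero
  rw [expectTm_fvarCount, Pi.div_apply]
  push_cast
  field_simp
  ring
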